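/- arXiv:1806.02767 — 3 statements merged into one kernel-verified Lean document; each statement's English description precedes it below -/
import Mathlib

section
/- Let k be an infinite field and A a graded Artinian k-algebra. Then there exists a nonempty Zariski-open subset U ⊆ A_1 (the complement of the zero locus of a nonzero polynomial function on the finite-dimensional vector space A_1) such that for every ℓ ∈ U, every ℓ' ∈ A_1, and every integer k ≥ 0, dim_k ker((×ℓ)^k : A → A) ≤ dim_k ker((×ℓ')^k : A → A); that is, the Jordan type P_{ℓ'} is dominated by P_ℓ for all ℓ ∈ U, so A has a well-defined generic linear Jordan type. -/
/-- A linear functional of the `n`-th power of a generic linear combination is polynomial. -/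
lemma gljt_poly {k A σ : Type*} [Field k] [CommRing A] [Algebra k A] [Fintype σ] (v : σ → A)
    (n : ℕ) : ∀ φ : A →ₗ[k] k, ∃ p : MvPolynomial σ k, ∀ x : σ → k,
      MvPolynomial.eval x p = φ ((∑ s, x s • v s) ^ n) := by
  induction n with
  | zero => intro φ; exact ⟨MvPolynomial.C (φ 1), fun x => by simp⟩
  | succ n ih =>
    intro φ
    choose p hp using fun s => ih (φ ∘ₗ LinearMap.mulLeft k (v s))
    refine ⟨∑ s, MvPolynomial.X s * p s, fun x => ?_⟩
    rw [pow_succ', Finset.sum_mul]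
    simp [hp]

/-- Lower semicontinuity of the rank of the `n`-th power. -/
lemma gljt_open {k A σ : Type*} [Field k] [CommRing A] [Algebra k A] [FiniteDimensional k A]
    [Fintype σ] (v : σ → A) (n : ℕ) (x₀ : σ → k) :
    ∃ p : MvPolynomial σ k, MvPolynomial.eval x₀ p ≠ 0 ∧ ∀ x : σ → k,
      MvPolynomial.eval x p ≠ 0 →
      Module.finrank k (LinearMap.ker (LinearMap.mulLeft k (∑ s, x s • v s) ^ n)) ≤
      Module.finrank k (LinearMap.ker (LinearMap.mulLeft k (∑ s, x₀ s • v s) ^ n)) := by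
  set f := LinearMap.mulLeft k (∑ s, x₀ s • v s) ^ n with hf
  let c := Module.finBasis k (LinearMap.range f)
  choose P hP using fun j => (c j).2
  obtain ⟨g, hg⟩ := (LinearMap.range f).subtype.exists_leftInverse_of_injective
    (Submodule.ker_subtype _)
  have hg' : ∀ y : LinearMap.range f, g (y : A) = y := fun y => LinearMap.congr_fun hg y
  let r := Module.finrank k (LinearMap.range f)
  let φ : Fin r → Fin r → (A →ₗ[k] k) := fun i j => c.coord i ∘ₗ g ∘ₗ LinearMap.mulRight k (P j)
  choose p hp using fun i j => gljt_poly v n (φ i j)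
  have hev : ∀ x, MvPolynomial.eval x (Matrix.of p).det =
      (Matrix.of fun i j => c.coord i (g ((LinearMap.mulLeft k (∑ s, x s • v s) ^ n) (P j)))).det := by
    intro x
    rw [RingHom.map_det]
    congr 1
    ext i j
    simp [hp, φ, LinearMap.pow_mulLeft]
  refine ⟨(Matrix.of p).det, ?_, fun x hx => ?_⟩
  · rw [hev]
    have : (Matrix.of fun i j => c.coord i (g (f (P j)))) = (1 : Matrix (Fin r) (Fin r) k) := by
      ext i j
      simp [hP, hg', Matrix.one_apply, Finsupp.single_apply, eq_comm]
    rw [← hf, this]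
    simp
  · rw [hev] at hx
    set h := LinearMap.mulLeft k (∑ s, x s • v s) ^ n with hh
    have h1 := f.finrank_range_add_finrank_ker
    have h2 := h.finrank_range_add_finrank_ker
    have hli : LinearIndependent k (fun j => h.rangeRestrict (P j)) := by
      have hc := Matrix.linearIndependent_cols_of_det_ne_zero hx
      let T : LinearMap.range h →ₗ[k] (Fin r → k) :=
        LinearMap.pi (fun i => c.coord i ∘ₗ g ∘ₗ (LinearMap.range h).subtype)
      refine LinearIndependent.of_comp T ?_
      exact hc
    have h3 := hli.fintype_card_le_finrank
    simp at h3
    omega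


/-- **Proposition (Prop. 1.3 / propdef:GenJorType, graded case).** Over an infinite field,
a graded Artinian algebra `A` has a generic linear Jordan type: there is a nonempty
Zariski-open subset `U ⊆ A₁` (the nonvanishing locus of a nonzero polynomial function on
`A₁`, written in coordinates with respect to a basis of `A₁`) such that for every `ℓ ∈ U`,
every `ℓ' ∈ A₁`, and every `n`, `dim ker((×ℓ)^n) ≤ dim ker((×ℓ')^n)`, i.e. `P_{ℓ'} ≤ P_ℓ`. -/
theorem generic_linear_jordan_type_exists
    (k : Type*) [Field k] [Infinite k]
    (A : Type*) [CommRing A] [Algebra k A] [FiniteDimensional k A]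
    (𝒜 : ℕ → Submodule k A) [GradedAlgebra 𝒜] (hA0 : 𝒜 0 = 1) :
    ∃ (F : MvPolynomial (Fin (Module.finrank k (𝒜 1))) k)
      (b : Module.Basis (Fin (Module.finrank k (𝒜 1))) k (𝒜 1)),
      F ≠ 0 ∧
      (∃ ℓ : 𝒜 1, MvPolynomial.eval (fun i => b.repr ℓ i) F ≠ 0) ∧
      ∀ ℓ : 𝒜 1, MvPolynomial.eval (fun i => b.repr ℓ i) F ≠ 0 →
        ∀ ℓ' ∈ 𝒜 1, ∀ n : ℕ,
          Module.finrank k (LinearMap.ker ((LinearMap.mulLeft k (ℓ : A)) ^ n)) ≤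
            Module.finrank k (LinearMap.ker ((LinearMap.mulLeft k ℓ') ^ n)) := by
  classical
  let b := Module.finBasis k (𝒜 1)
  let v : Fin (Module.finrank k (𝒜 1)) → A := fun s => (b s : A)
  have hrep : ∀ ℓ : 𝒜 1, (∑ s, b.repr ℓ s • v s) = (ℓ : A) := by
    intro ℓ
    have h := congrArg (fun y : 𝒜 1 => (y : A)) (b.sum_repr ℓ)
    simp only [Submodule.coe_sum, Submodule.coe_smul] at h
    exact h
  have key : ∀ n : ℕ, ∃ p : MvPolynomial (Fin (Module.finrank k (𝒜 1))) k, p ≠ 0 ∧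
      ∀ ℓ : 𝒜 1, MvPolynomial.eval (fun i => b.repr ℓ i) p ≠ 0 → ∀ ℓ' ∈ 𝒜 1,
        Module.finrank k (LinearMap.ker ((LinearMap.mulLeft k (ℓ : A)) ^ n)) ≤
            Module.finrank k (LinearMap.ker ((LinearMap.mulLeft k ℓ') ^ n)) := by
    intro n
    let d : 𝒜 1 → ℕ := fun ℓ =>
      Module.finrank k (LinearMap.ker ((LinearMap.mulLeft k (ℓ : A)) ^ n))
    let m := Function.argmin d
    obtain ⟨p, hp0, hp⟩ := gljt_open v n (fun i => b.repr m i)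
    refine ⟨p, fun h => hp0 (by simp [h]), fun ℓ hℓ ℓ' hℓ' => ?_⟩
    have h1 := hp (fun i => b.repr ℓ i) hℓ
    rw [hrep ℓ, hrep m] at h1
    exact h1.trans (Function.argmin_le d (⟨ℓ', hℓ'⟩ : 𝒜 1))
  choose p hp0 hp using key
  let N := Module.finrank k A
  have hF : (∏ n ∈ Finset.range (N + 1), p n) ≠ 0 :=
    Finset.prod_ne_zero_iff.mpr fun n _ => hp0 n
  refine ⟨∏ n ∈ Finset.range (N + 1), p n, b, hF, ?_, ?_⟩
  · by_contra! hcon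
    apply hF
    apply MvPolynomial.funext
    intro x
    have := hcon (b.equivFun.symm x)
    have hx : (fun i => b.repr (b.equivFun.symm x) i) = x := by
      ext i
      exact congrFun (b.equivFun.apply_symm_apply x) i
    rw [hx] at this
    simpa using this
  · intro ℓ hℓ ℓ' hℓ' n
    rw [map_prod, Finset.prod_ne_zero_iff] at hℓ
    by_cases hn : n ≤ N
    · exact hp n ℓ (hℓ n (by simp; omega)) ℓ' hℓ'
    · rw [Module.End.ker_pow_eq_ker_pow_finrank_of_le (by omega : N ≤ n),
        Module.End.ker_pow_eq_ker_pow_finrank_of_le (by omega : N ≤ n)]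
      exact hp N ℓ (hℓ N (by simp)) ℓ' hℓ'
end

section
/- Let k be a field, let W ⊂ GL_n(k) be a finite group acting on R = k[x_1,…,x_n] by linear substitutions, and let K ≤ W be a subgroup. If the invariant ring R^K is polynomial, then the coinvariant algebra R_W is a free extension of the relative coinvariant algebra R^K_W with fiber R_K: the map ι : R^K_W → R_W induced by the inclusion R^K ⊆ R is injective and makes R_W a free R^K_W-module, and the natural surjection π : R_W → R_K (induced by 𝔥(W) ⊆ 𝔥(K)) satisfies ker π = ι(m)·R_W, where m is the graded maximal ideal of R^K_W. -/
/-- The subalgebra of `K`-invariants of a linear action of a group `G` on a `k`-algebra `R`,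
for a subgroup `K ≤ G`. -/
def relInvariants (k R G : Type*) [CommSemiring k] [CommSemiring R] [Algebra k R]
    [Group G] [MulSemiringAction G R] [SMulCommClass G k R] (K : Subgroup G) :
    Subalgebra k R where
  carrier := {f | ∀ g ∈ K, g • f = f}
  mul_mem' := fun ha hb g hg => by rw [smul_mul', ha g hg, hb g hg]
  add_mem' := fun ha hb g hg => by rw [smul_add, ha g hg, hb g hg]
  algebraMap_mem' := fun c g hg => by
    rw [Algebra.algebraMap_eq_smul_one, smul_comm, smul_one]

/-- The Hilbert ideal `𝔥(K)` of a subgroup `K`: the ideal of `R = k[x_1,…,x_n]` generated by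
the `K`-invariant polynomials of positive degree (i.e. with zero constant term). -/
noncomputable def hilbertIdeal (k : Type*) [CommRing k] (n : ℕ) (G : Type*) [Group G]
    [MulSemiringAction G (MvPolynomial (Fin n) k)] (K : Subgroup G) :
    Ideal (MvPolynomial (Fin n) k) :=
  Ideal.span {f | (∀ g ∈ K, g • f = f) ∧ MvPolynomial.coeff 0 f = 0}

universe u
open RingTheory.Sequence IsLocalRing CategoryTheory CategoryTheory.Abelian

namespace CoinvAux

/-- Vanishing of Ext descends along quotients by regular elements. -/
lemma ext_quot {R : Type u} [CommRing R] (N M : ModuleCat.{u} R) (n : ℕ)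
    (h : ∀ i < n + 1, Subsingleton (Ext N M i)) (a : R) (ha : IsSMulRegular M a) :
    ∀ i < n, Subsingleton (Ext N (ModuleCat.of R (QuotSMulTop a M)) i) := by
  intro i hi
  have zero1 := AddCommGrpCat.isZero_of_iff_subsingleton.mpr (h i (by omega))
  have zero2 := AddCommGrpCat.isZero_of_iff_subsingleton.mpr (h (i + 1) (by omega))
  exact AddCommGrpCat.subsingleton_of_isZero <| ShortComplex.Exact.isZero_of_both_zeros
    ((Ext.covariant_sequence_exact₃' N ha.smulShortComplex_shortExact) i (i + 1) rfl)
    (zero1.eq_zero_of_src _) (zero2.eq_zero_of_tgt _)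

lemma regular_of_notMem {R : Type*} [CommRing R] [IsNoetherianRing R] {M : Type*} [AddCommGroup M]
    [Module R M] {a : R} (h : ∀ P ∈ associatedPrimes R M, a ∉ P) : IsSMulRegular M a := by
  have := biUnion_associatedPrimes_eq_zero_divisors R M
  rw [isSMulRegular_iff_right_eq_zero_of_smul]
  intro x hx
  by_contra hx0
  have h2 : a ∈ { r : R | ∃ x : M, x ≠ 0 ∧ r • x = 0 } := ⟨x, hx0, hx⟩
  rw [← this] at h2
  simp only [Set.mem_iUnion] at h2
  obtain ⟨P, hP, h3⟩ := h2
  exact h P hP h3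

lemma notMem_of_regular {R : Type*} [CommRing R] [IsNoetherianRing R] {M : Type*} [AddCommGroup M]
    [Module R M] {a : R} (h : IsSMulRegular M a) : ∀ P ∈ associatedPrimes R M, a ∉ P := by
  intro P hP haP
  have := biUnion_associatedPrimes_eq_zero_divisors R M
  have h2 : a ∈ ⋃ p ∈ associatedPrimes R M, (p : Set R) := by
    simp only [Set.mem_iUnion]; exact ⟨P, hP, haP⟩
  rw [this] at h2
  obtain ⟨x, hx0, hx⟩ := h2
  exact hx0 ((isSMulRegular_iff_right_eq_zero_of_smul (M := M)).mp h x hx)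

lemma free_of_reg (n : ℕ) : ∀ (A : Type u) [CommRing A] [IsLocalRing A] [IsNoetherianRing A]
    (M : Type u) [AddCommGroup M] [Module A M] [Module.Finite A M] (rs : List A)
    (_ : rs.length = n) (_ : ∀ r ∈ rs, r ∈ maximalIdeal A) (_ : IsWeaklyRegular M rs)
    (t : Fin n → A) (_ : maximalIdeal A = Ideal.span (Set.range t)), Module.Free A M := by
  induction n with
  | zero =>
    intro A _ _ _ M _ _ _ rs _ _ _ t ht
    have h0 : maximalIdeal A = ⊥ := by
      rw [ht, Set.range_eq_empty, Ideal.span_empty]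
    have := Module.finitePresentation_of_finite A M
    apply Module.free_of_maximalIdeal_rTensor_injective
    have : Subsingleton (maximalIdeal A) := by rw [h0]; infer_instance
    exact Function.injective_of_subsingleton _
  | succ n ih =>
    intro A _ _ _ M _ _ _ rs hlen hmem hreg t ht
    rcases subsingleton_or_nontrivial M with hM | hM
    · exact Module.Free.of_subsingleton A M
    have hreg' : IsRegular M rs :=
      (IsLocalRing.isRegular_iff_isWeaklyRegular_of_subset_maximalIdeal hmem).mpr hreg
    obtain ⟨r, rs', rfl⟩ : ∃ r rs', rs = r :: rs' := by
      cases rs with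
      | nil => simp at hlen
      | cons r rs' => exact ⟨r, rs', rfl⟩
    have hr := ((isWeaklyRegular_cons_iff M r rs').mp hreg).1
    have hrm : r ∈ maximalIdeal A := hmem r (by simp)
    obtain ⟨a, ham, ha2, haP⟩ : ∃ a ∈ maximalIdeal A, a ∉ (maximalIdeal A) ^ 2 ∧
        ∀ P ∈ associatedPrimes A M, a ∉ P := by
      by_contra! hcon
      obtain ⟨P, hP, hle⟩ := (Ideal.subset_union_prime_finite
        (s := insert ((maximalIdeal A) ^ 2) (associatedPrimes A M))
        ((associatedPrimes.finite A M).insert _) (f := id) ((maximalIdeal A) ^ 2)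
        ((maximalIdeal A) ^ 2) (I := maximalIdeal A) (by
          intro i hi hne _
          rcases hi with hi | hi
          · exact absurd hi hne
          · exact hi.isPrime)).mp (by
          intro x hx
          simp only [Set.mem_iUnion]
          by_cases h2 : x ∈ (maximalIdeal A) ^ 2
          · exact ⟨_, Or.inl rfl, h2⟩
          · obtain ⟨P, hP, hxP⟩ := hcon x hx h2
            exact ⟨P, Or.inr hP, hxP⟩)
      rcases hP with rfl | hP
      · have hbot : maximalIdeal A = ⊥ := by
          apply Submodule.eq_bot_of_le_smul_of_le_jacobson_bot (maximalIdeal A) _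
            (IsNoetherian.noetherian _)
          · simpa [pow_two] using hle
          · exact IsLocalRing.maximalIdeal_le_jacobson _
        rw [hbot, Ideal.mem_bot] at hrm
        subst hrm
        exact not_subsingleton M (IsSMulRegular.zero_iff_subsingleton.mp hr)
      · exact notMem_of_regular hr P hP (hle hrm)
    have hareg := regular_of_notMem haP
    let Q := A ⧸ Ideal.span {a}
    have hne : Ideal.span {a} ≠ ⊤ := by
      intro h
      have : Ideal.span {a} ≤ maximalIdeal A := by simpa using ham
      rw [h] at this
      exact (maximalIdeal.isMaximal A).ne_top (top_le_iff.mp this)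
    have : Nontrivial Q := Ideal.Quotient.nontrivial_iff.mpr hne
    have : IsLocalRing Q := IsLocalRing.of_surjective' (Ideal.Quotient.mk (Ideal.span {a}))
      Ideal.Quotient.mk_surjective
    have : Module.Finite Q (QuotSMulTop a M) :=
      Module.Finite.of_restrictScalars_finite A Q (QuotSMulTop a M)
    have := Module.finitePresentation_of_finite A M
    have hlt : maximalIdeal A • (⊤ : Submodule A M) < ⊤ := by
      rw [lt_top_iff_ne_top]
      exact (Submodule.top_ne_ideal_smul_of_le_jacobson_annihilator
        (IsLocalRing.maximalIdeal_le_jacobson _)).symm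
    have hsupp : Module.support A (A ⧸ maximalIdeal A) =
        PrimeSpectrum.zeroLocus (maximalIdeal A : Set A) := by
      rw [Module.support_eq_zeroLocus, Ideal.annihilator_quotient]
    have hext := ModuleCat.subsingleton_ext_of_exists_isRegular (maximalIdeal A)
      (ModuleCat.of A (A ⧸ maximalIdeal A)) hsupp.subset (ModuleCat.of A M) hlt _ hmem hreg'
    rw [hlen] at hext
    have hext' := ext_quot _ _ n hext a hareg
    have hlt' : maximalIdeal A • (⊤ : Submodule A (QuotSMulTop a M)) < ⊤ := by
      have := nontrivial_quotSMulTop_of_mem_maximalIdeal M ham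
      rw [lt_top_iff_ne_top]
      exact (Submodule.top_ne_ideal_smul_of_le_jacobson_annihilator
        (IsLocalRing.maximalIdeal_le_jacobson _)).symm
    obtain ⟨ss, hss, hssm, hssr⟩ := ModuleCat.exists_isRegular_of_exists_subsingleton_ext
      (maximalIdeal A) n (ModuleCat.of A (QuotSMulTop a M)) hlt' _ hsupp hext'
    rw [← Module.free_quotSMulTop_iff_free A M (x := a)
      (IsLocalRing.maximalIdeal_le_jacobson _ ham) hareg]
    have hmax : maximalIdeal Q = (maximalIdeal A).map (Ideal.Quotient.mk (Ideal.span {a})) :=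
      (IsLocalRing.map_maximalIdeal_of_surjective _ Ideal.Quotient.mk_surjective).symm
    obtain ⟨c, hc⟩ := (Ideal.mem_span_range_iff_exists_fun).mp (ht ▸ ham)
    obtain ⟨i₀, hi₀⟩ : ∃ i, IsUnit (c i) := by
      by_contra! hcon
      apply ha2
      rw [← hc, pow_two]
      refine Ideal.sum_mem _ fun i _ => Ideal.mul_mem_mul ((mem_maximalIdeal _).mpr (hcon i)) ?_
      rw [ht]; exact Ideal.subset_span ⟨i, rfl⟩
    refine ih Q (QuotSMulTop a M) (ss.map (algebraMap A Q)) (by simpa using hss) ?_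
      ((isWeaklyRegular_map_algebraMap_iff _ _ _).mpr hssr.toIsWeaklyRegular)
      (fun j => Ideal.Quotient.mk (Ideal.span {a}) (t (i₀.succAbove j))) ?_
    · intro r hr
      obtain ⟨s, hs, rfl⟩ := List.mem_map.mp hr
      rw [hmax]
      exact Ideal.mem_map_of_mem _ (hssm s hs)
    · rw [hmax, ht, Ideal.map_span]
      apply le_antisymm
      · rw [Ideal.span_le]
        rintro _ ⟨_, ⟨i, rfl⟩, rfl⟩
        rcases Fin.eq_self_or_eq_succAbove i₀ i with rfl | ⟨j, rfl⟩
        · obtain ⟨v, hv⟩ := hi₀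
          have h0 : (0 : Q) = ∑ i, Ideal.Quotient.mk (Ideal.span {a}) (c i) *
              Ideal.Quotient.mk (Ideal.span {a}) (t i) := by
            have h3 : Ideal.Quotient.mk (Ideal.span {a}) (∑ i, c i * t i) = 0 :=
              (Ideal.Quotient.eq_zero_iff_mem (I := Ideal.span {a})).mpr
                (hc.symm ▸ Ideal.mem_span_singleton_self a)
            rw [← h3]
            simp
          rw [Fin.sum_univ_succAbove _ i] at h0
          have h1 : Ideal.Quotient.mk (Ideal.span {a}) (t i) =
              - Ideal.Quotient.mk (Ideal.span {a}) (↑v⁻¹ : A) *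
              ∑ j, Ideal.Quotient.mk (Ideal.span {a}) (c (i.succAbove j)) *
              Ideal.Quotient.mk (Ideal.span {a}) (t (i.succAbove j)) := by
            have h2 : Ideal.Quotient.mk (Ideal.span {a}) (↑v⁻¹ : A) *
                Ideal.Quotient.mk (Ideal.span {a}) (c i) = 1 := by
              rw [← map_mul, ← hv]; simp
            linear_combination (-Ideal.Quotient.mk (Ideal.span {a}) (↑v⁻¹ : A)) * h0
              - (Ideal.Quotient.mk (Ideal.span {a}) (t i)) * h2
          rw [SetLike.mem_coe, h1]
          refine Ideal.mul_mem_left _ _ (Ideal.sum_mem _ fun j _ => Ideal.mul_mem_left _ _ ?_)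
          exact Ideal.subset_span ⟨j, rfl⟩
        · exact Ideal.subset_span ⟨j, rfl⟩
      · apply Ideal.span_mono
        rintro _ ⟨j, rfl⟩
        exact ⟨_, ⟨_, rfl⟩, rfl⟩


lemma exists_reg {A R : Type u} [CommRing A] [CommRing R] [Algebra A R] [IsNoetherianRing R]
    (I : Ideal A) (N : ModuleCat.{u} R) [Module.Finite R N]
    (hN : Module.support R N = PrimeSpectrum.zeroLocus (I.map (algebraMap A R) : Set R)) (n : ℕ) :
    ∀ (M : ModuleCat.{u} R) [Module.Finite R M] (_ : ∀ i < n, Subsingleton (Ext N M i)),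
    ∃ rs : List A, rs.length = n ∧ (∀ r ∈ rs, r ∈ I) ∧
      IsWeaklyRegular M (rs.map (algebraMap A R)) := by
  induction n with
  | zero =>
    intro M _ _
    exact ⟨[], rfl, by simp, by simp⟩
  | succ n ih =>
    intro M _ hext
    have hN' := hN
    rw [Module.support_eq_zeroLocus, PrimeSpectrum.zeroLocus_eq_iff] at hN'
    have : Subsingleton (N ⟶ M) := Ext.addEquiv₀.subsingleton_congr.mp (hext 0 n.zero_lt_succ)
    have : Subsingleton (N →ₗ[R] M) := ModuleCat.homAddEquiv.symm.subsingleton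
    obtain ⟨x, mem_ann, hx⟩ := IsSMulRegular.subsingleton_linearMap_iff.mp this
    obtain ⟨k, hk⟩ := le_of_le_of_eq Ideal.le_radical hN' mem_ann
    obtain ⟨a, haI, haP⟩ : ∃ a ∈ I, ∀ P ∈ associatedPrimes R M, algebraMap A R a ∉ P := by
      by_contra! hcon
      obtain ⟨P, hP, hle⟩ := (Ideal.subset_union_prime_finite
        (s := associatedPrimes R M) (associatedPrimes.finite R M)
        (f := fun P => P.comap (algebraMap A R)) ⊥ ⊥ (I := I) (by
          intro i hi _ _
          have := hi.isPrime
          exact Ideal.comap_isPrime _ _)).mp (by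
          intro y hy
          simp only [Set.mem_iUnion]
          obtain ⟨P, hP, hyP⟩ := hcon y hy
          exact ⟨P, hP, hyP⟩)
      exact notMem_of_regular (hx.pow k) P hP (Ideal.map_le_iff_le_comap.mpr hle hk)
    have hareg := regular_of_notMem haP
    obtain ⟨rs, h1, h2, h3⟩ := ih (ModuleCat.of R (QuotSMulTop (algebraMap A R a) M))
      (ext_quot N M n hext _ hareg)
    refine ⟨a :: rs, by simpa using h1, by simpa using ⟨haI, h2⟩, ?_⟩
    rw [List.map_cons]
    exact IsWeaklyRegular.cons hareg h3

open TensorProduct in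
lemma free_quotient {A R : Type u} [CommRing A] [CommRing R] [Algebra A R] [IsNoetherianRing R]
    [IsNoetherianRing A] [Module.Finite A R] (m : Ideal A) [m.IsMaximal] (n : ℕ) (t : Fin n → A)
    (ht : m = Ideal.span (Set.range t)) (xs : List R) (hlen : xs.length = n)
    (hxs : IsRegular R xs) (hrad : ∀ x ∈ xs, x ∈ (m.map (algebraMap A R)).radical)
    (J : Ideal A) (hJ : ∀ a : A, a ∉ m → IsUnit (Ideal.Quotient.mk J a)) :
    Module.Free (A ⧸ J) ((A ⧸ J) ⊗[A] R) := by
  let N := ModuleCat.of R (R ⧸ m.map (algebraMap A R))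
  have hN : Module.support R N = PrimeSpectrum.zeroLocus (m.map (algebraMap A R) : Set R) := by
    change Module.support R (R ⧸ m.map (algebraMap A R)) = _
    rw [Module.support_eq_zeroLocus, Ideal.annihilator_quotient]
  have hN2 : Module.support R N ⊆ PrimeSpectrum.zeroLocus (Ideal.ofList xs : Set R) := by
    rw [hN, PrimeSpectrum.zeroLocus_subset_zeroLocus_iff]
    exact Ideal.span_le.mpr hrad
  have hext := ModuleCat.subsingleton_ext_of_exists_isRegular (Ideal.ofList xs) N hN2
    (ModuleCat.of R R) hxs.2.symm.lt_top xs (fun r hr => Ideal.subset_span hr) hxs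
  rw [hlen] at hext
  obtain ⟨rs, h1, h2, h3⟩ := exists_reg m N hN n (ModuleCat.of R R) hext
  have h4 : IsWeaklyRegular R rs := (isWeaklyRegular_map_algebraMap_iff R R rs).mp h3
  let L := Localization.AtPrime m
  have h5 : IsWeaklyRegular (L ⊗[A] R) (rs.map (algebraMap A L)) :=
    have : Module.Flat A L := IsLocalization.flat L m.primeCompl
    h4.of_flat_of_isBaseChange (TensorProduct.isBaseChange A R L)
  have hmax : maximalIdeal L = m.map (algebraMap A L) :=
    (Localization.AtPrime.map_eq_maximalIdeal).symm
  have : IsNoetherianRing L := IsLocalization.isNoetherianRing m.primeCompl L ‹_›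
  have hfree : Module.Free L (L ⊗[A] R) := by
    refine free_of_reg n L (L ⊗[A] R) _ (by simpa using h1) ?_ h5 (fun i => algebraMap A L (t i)) ?_
    · intro r hr
      obtain ⟨s, hs, rfl⟩ := List.mem_map.mp hr
      rw [hmax]
      exact Ideal.mem_map_of_mem _ (h2 s hs)
    · exact hmax.trans ((congrArg (Ideal.map (algebraMap A L)) ht).trans
        (by rw [Ideal.map_span, ← Set.range_comp]; rfl))
  let φ : L →+* A ⧸ J := IsLocalization.lift (M := m.primeCompl) (g := Ideal.Quotient.mk J)
    (fun y => hJ y y.2)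
  let : Algebra L (A ⧸ J) := φ.toAlgebra
  have : IsScalarTower A L (A ⧸ J) := IsScalarTower.of_algebraMap_eq fun a =>
    (IsLocalization.lift_eq (M := m.primeCompl) (g := Ideal.Quotient.mk J) _ a).symm
  exact Module.Free.of_equiv (AlgebraTensorModule.cancelBaseChange A L (A ⧸ J) (A ⧸ J) R)

lemma mvX_regular {k : Type*} [Field k] {σ : Type*} (l : List σ) (hl : l.Nodup) :
    IsRegular (MvPolynomial σ k) (l.map (MvPolynomial.X (R := k))) := by
  classical
  have hspan : ∀ l : List σ, Ideal.ofList (l.map (MvPolynomial.X (R := k))) •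
      (⊤ : Submodule (MvPolynomial σ k) (MvPolynomial σ k)) =
      Ideal.span (MvPolynomial.X '' {i | i ∈ l}) := by
    intro l
    rw [smul_eq_mul, Ideal.mul_top, Ideal.ofList]
    congr 1
    ext; simp
  refine ⟨⟨?_⟩, ?_⟩
  · intro i hi
    rw [List.length_map] at hi
    rw [← List.map_take, hspan, List.getElem_map, isSMulRegular_iff_right_eq_zero_of_smul]
    intro y
    obtain ⟨f, rfl⟩ := Submodule.Quotient.mk_surjective _ y
    rw [← Submodule.Quotient.mk_smul, Submodule.Quotient.mk_eq_zero,
      Submodule.Quotient.mk_eq_zero, MvPolynomial.mem_ideal_span_X_image,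
      MvPolynomial.mem_ideal_span_X_image]
    intro h s hs
    obtain ⟨j, hj, hj2⟩ := h (Finsupp.single l[i] 1 + s) (by
      rw [smul_eq_mul, MvPolynomial.mem_support_iff, MvPolynomial.coeff_X_mul]
      simpa using hs)
    refine ⟨j, hj, ?_⟩
    have hne : l[i] ≠ j := by
      rintro rfl
      rw [Set.mem_ofPred_eq, List.mem_take_iff_getElem] at hj
      obtain ⟨j', hj', h'⟩ := hj
      have := (List.Nodup.getElem_inj_iff hl).mp h'
      omega
    simpa [Finsupp.single_apply, hne] using hj2
  · rw [hspan]
    intro h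
    have : (1 : MvPolynomial σ k) ∈ Ideal.span (MvPolynomial.X '' {i | i ∈ l}) := by
      rw [← h]; trivial
    rw [MvPolynomial.mem_ideal_span_X_image] at this
    obtain ⟨i, _, hi⟩ := this 0 (by simp)
    simp at hi

lemma free_transport {A R : Type u} [CommRing A] [CommRing R] [Algebra A R] (h : Ideal R)
    (J : Ideal A) (hJ : J.map (algebraMap A R) = h) (φ : A ⧸ J →+* R ⧸ h)
    (hφ : ∀ a, φ (Ideal.Quotient.mk J a) = Ideal.Quotient.mk h (algebraMap A R a))
    (hf : Module.Free (A ⧸ J) (TensorProduct A (A ⧸ J) R)) :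
    @Module.Free (A ⧸ J) (R ⧸ h) _ _ (Module.compHom _ φ) := by
  let _ : Module (A ⧸ J) (R ⧸ h) := Module.compHom _ φ
  have hsm : ∀ (q : A ⧸ J) (x : R ⧸ h), q • x = φ q * x := fun _ _ => rfl
  have : IsScalarTower A (A ⧸ J) (R ⧸ h) := by
    refine ⟨fun a q x => ?_⟩
    rw [hsm, hsm, Algebra.smul_def, map_mul, Ideal.Quotient.algebraMap_eq, hφ, Algebra.smul_def,
      mul_assoc]
    rfl
  have heq : J • (⊤ : Submodule A R) = h.restrictScalars A := by
    rw [Ideal.smul_top_eq_map, hJ]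
  let e : TensorProduct A (A ⧸ J) R ≃ₗ[A] R ⧸ h :=
    TensorProduct.quotTensorEquivQuotSMul R J ≪≫ₗ Submodule.quotEquivOfEq _ _ heq ≪≫ₗ
      Submodule.Quotient.restrictScalarsEquiv A h
  exact Module.Free.of_equiv (e.extendScalarsOfSurjective Ideal.Quotient.mk_surjective)

/-- The base change of `R` to `A ⧸ J` is free. -/
def FreeQuot (A R : Type u) [CommRing A] [CommRing R] [Algebra A R] (J : Ideal A) : Prop :=
  Module.Free (A ⧸ J) (TensorProduct A (A ⧸ J) R)

lemma isUnit_mk_add {B : Type*} [CommRing B] (J : Ideal B) (x y : B) (N : ℕ) (hx : x ^ N ∈ J)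
    (hy : IsUnit y) : IsUnit (Ideal.Quotient.mk J (x + y)) := by
  rw [map_add]
  refine IsNilpotent.isUnit_add_right_of_commute ⟨N, ?_⟩ (hy.map _) (Commute.all _ _)
  rw [← map_pow, Ideal.Quotient.eq_zero_iff_mem]
  exact hx

section Action

variable {k : Type u} [Field k] {n : ℕ} {G : Type*} [Group G]
    [MulSemiringAction G (MvPolynomial (Fin n) k)]
    [SMulCommClass G k (MvPolynomial (Fin n) k)]

open MvPolynomial

lemma smul_C' (g : G) (c : k) : g • (C c : MvPolynomial (Fin n) k) = C c := by
  rw [← algebraMap_eq, Algebra.algebraMap_eq_smul_one, smul_comm, smul_one]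

lemma coeff_smul' (hlin : ∀ (g : G) (d : ℕ) (f : MvPolynomial (Fin n) k),
      f.IsHomogeneous d → (g • f).IsHomogeneous d) (g : G) (f : MvPolynomial (Fin n) k) :
    coeff 0 (g • f) = coeff 0 f := by
  conv_rhs => rw [← sum_homogeneousComponent f]
  conv_lhs => rw [← sum_homogeneousComponent f]
  rw [Finset.smul_sum, coeff_sum, coeff_sum]
  refine Finset.sum_congr rfl fun i _ => ?_
  rcases Nat.eq_zero_or_pos i with rfl | hi
  · rw [homogeneousComponent_zero, smul_C']
  · have h1 := homogeneousComponent_isHomogeneous i f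
    rw [h1.coeff_eq_zero (by simpa using hi.ne), (hlin g i _ h1).coeff_eq_zero (by simpa using hi.ne)]

lemma pow_mem (hlin : ∀ (g : G) (d : ℕ) (f : MvPolynomial (Fin n) k),
      f.IsHomogeneous d → (g • f).IsHomogeneous d) [Finite G] (H : Subgroup G)
    (a : MvPolynomial (Fin n) k) (ha : coeff 0 a = 0) :
    ∃ N : ℕ, a ^ N ∈ hilbertIdeal k n G H := by
  classical
  have := Fintype.ofFinite H
  let P := MulSemiringAction.charpoly H a
  have hm : P.Monic := MulSemiringAction.monic_charpoly H a
  have hmap : P.map (constantCoeff (R := k) (σ := Fin n)) = Polynomial.X ^ (Fintype.card H) := by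
    rw [show P = ∏ g : H, (Polynomial.X - Polynomial.C (g • a)) from
      MulSemiringAction.charpoly_eq H a, Polynomial.map_prod]
    rw [Finset.prod_congr rfl (g := fun _ => Polynomial.X)]
    · simp
    · intro g _
      have : coeff 0 (g • a) = 0 := (coeff_smul' hlin (g : G) a).trans ha
      simp [constantCoeff_eq, this]
  have hdeg : P.natDegree = Fintype.card H := by
    rw [← hm.natDegree_map (constantCoeff (R := k) (σ := Fin n)), hmap, Polynomial.natDegree_X_pow]
  have hev : P.eval a = 0 := MulSemiringAction.eval_charpoly H a
  rw [Polynomial.eval_eq_sum_range, Finset.sum_range_succ, hm.coeff_natDegree, one_mul] at hev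
  refine ⟨P.natDegree, ?_⟩
  rw [eq_neg_of_add_eq_zero_right hev]
  refine neg_mem (Ideal.sum_mem _ fun i hi => Ideal.mul_mem_right _ _ (Ideal.subset_span ⟨?_, ?_⟩))
  · intro g hg
    exact MulSemiringAction.smul_coeff_charpoly a i (⟨g, hg⟩ : H)
  · rw [← constantCoeff_eq, ← Polynomial.coeff_map, hmap, Polynomial.coeff_X_pow, if_neg]
    rw [← hdeg]
    exact (Finset.mem_range.mp hi).ne

lemma finite_inv [Finite G] (H : Subgroup G) :
    Module.Finite (relInvariants k (MvPolynomial (Fin n) k) G H) (MvPolynomial (Fin n) k) := by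
  have : Algebra.IsInvariant (relInvariants k (MvPolynomial (Fin n) k) G H)
      (MvPolynomial (Fin n) k) H := ⟨fun b hb => ⟨⟨b, fun g hg => hb ⟨g, hg⟩⟩, rfl⟩⟩
  have : SMulCommClass H (relInvariants k (MvPolynomial (Fin n) k) G H)
      (MvPolynomial (Fin n) k) := by
    refine ⟨fun g a b => ?_⟩
    change (g : G) • ((a : MvPolynomial (Fin n) k) * b) = (a : MvPolynomial (Fin n) k) * (g : G) • b
    rw [smul_mul', a.2 g g.2]
  have := Algebra.IsInvariant.isIntegral (relInvariants k (MvPolynomial (Fin n) k) G H)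
    (MvPolynomial (Fin n) k) H
  have : Algebra.FiniteType (relInvariants k (MvPolynomial (Fin n) k) G H)
      (MvPolynomial (Fin n) k) := Algebra.FiniteType.of_restrictScalars_finiteType k _ _
  exact Algebra.IsIntegral.finite

lemma main_free [Finite G] (hlin : ∀ (g : G) (d : ℕ) (f : MvPolynomial (Fin n) k),
      f.IsHomogeneous d → (g • f).IsHomogeneous d) (K : Subgroup G)
    (p : Fin n → MvPolynomial (Fin n) k)
    (A : Subalgebra k (MvPolynomial (Fin n) k))
    (hA : A = relInvariants k (MvPolynomial (Fin n) k) G K)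
    (hp : Algebra.adjoin k (Set.range p) = A)
    (J : Ideal A) (hJ : J = Ideal.comap A.val (hilbertIdeal k n G ⊤)) :
    FreeQuot A (MvPolynomial (Fin n) k) J := by
  have : Module.Finite A (MvPolynomial (Fin n) k) := by
    rw [hA]
    exact finite_inv K
  have : Algebra.FiniteType k A := by
    rw [← Subalgebra.fg_iff_finiteType, ← hp]
    exact Subalgebra.fg_def.mpr ⟨_, Set.finite_range p, rfl⟩
  have : IsNoetherianRing A := Algebra.FiniteType.isNoetherianRing k A
  let ψ : A →+* k := (constantCoeff (R := k) (σ := Fin n)).comp A.val.toRingHom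
  have hψ : Function.Surjective ψ := fun c => ⟨algebraMap k A c, by
    change constantCoeff (C c) = c
    simp⟩
  have hmx : (RingHom.ker ψ).IsMaximal := RingHom.ker_isMaximal_of_surjective ψ hψ
  have hψalg : ∀ c : k, ψ (algebraMap k A c) = c := fun c => by
    change constantCoeff (C c) = c
    simp
  have hpA : ∀ i, p i ∈ A := fun i => hp ▸ Algebra.subset_adjoin ⟨i, rfl⟩
  let t : Fin n → A := fun i => ⟨p i, hpA i⟩ - algebraMap k A (ψ ⟨p i, hpA i⟩)
  have key : ∀ x ∈ Algebra.adjoin k (Set.range p), ∀ hx : x ∈ A,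
      (⟨x, hx⟩ : A) - algebraMap k A (ψ ⟨x, hx⟩) ∈ Ideal.span (Set.range t) := by
    intro x hx
    induction hx using Algebra.adjoin_induction with
    | mem x hx =>
      rintro hxA
      obtain ⟨i, rfl⟩ := hx
      exact Ideal.subset_span ⟨i, rfl⟩
    | algebraMap c =>
      intro hx
      have : (⟨algebraMap k _ c, hx⟩ : A) = algebraMap k A c := rfl
      rw [this, hψalg, sub_self]
      exact zero_mem _
    | add x y hx hy ihx ihy =>
      intro hxy
      rw [hp] at hx hy
      have h1 : (⟨x + y, hxy⟩ : A) = ⟨x, hx⟩ + ⟨y, hy⟩ := rfl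
      rw [h1, map_add, map_add]
      convert add_mem (ihx hx) (ihy hy) using 1
      ring
    | mul x y hx hy ihx ihy =>
      intro hxy
      rw [hp] at hx hy
      have h1 : (⟨x * y, hxy⟩ : A) = ⟨x, hx⟩ * ⟨y, hy⟩ := rfl
      rw [h1, map_mul, map_mul]
      convert add_mem (Ideal.mul_mem_right ⟨y, hy⟩ _ (ihx hx))
        (Ideal.mul_mem_left _ (algebraMap k A (ψ ⟨x, hx⟩)) (ihy hy)) using 1
      ring
  have ht : RingHom.ker ψ = Ideal.span (Set.range t) := by
    apply le_antisymm
    · intro a ha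
      have h1 := key a (hp.symm ▸ a.2 : (a : MvPolynomial (Fin n) k) ∈ Algebra.adjoin k (Set.range p)) a.2
      have h2 : ψ a = 0 := ha
      have h3 : (⟨(a : MvPolynomial (Fin n) k), a.2⟩ : A) = a := rfl
      rw [h3, h2, map_zero, sub_zero] at h1
      exact h1
    · rw [Ideal.span_le]
      rintro _ ⟨i, rfl⟩
      change ψ (t i) = 0
      rw [map_sub, hψalg, sub_self]
  refine free_quotient (RingHom.ker ψ) n t ht ((List.finRange n).map X) (by simp)
    (mvX_regular _ (List.nodup_finRange n)) ?_ _ ?_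
  · intro x hx
    obtain ⟨i, _, rfl⟩ := List.mem_map.mp hx
    obtain ⟨N, hN⟩ := pow_mem hlin K (X i : MvPolynomial (Fin n) k) (by simp)
    refine ⟨N, ?_⟩
    refine (Ideal.span_le.mpr ?_) hN
    rintro f ⟨hf1, hf2⟩
    have hfA : f ∈ A := by
      rw [hA]
      exact hf1
    have hfk : (⟨f, hfA⟩ : A) ∈ RingHom.ker ψ := hf2
    exact Ideal.mem_map_of_mem (algebraMap A (MvPolynomial (Fin n) k)) hfk
  · intro a ha
    let a₀ : A := a - algebraMap k A (ψ a)
    obtain ⟨N, hN⟩ := pow_mem hlin ⊤ (a₀ : MvPolynomial (Fin n) k) (by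
      change ψ a₀ = 0
      rw [map_sub, hψalg, sub_self])
    have h1 : a = a₀ + algebraMap k A (ψ a) := by simp [a₀]
    have h2 : ψ a ≠ 0 := ha
    have h3 : a₀ ^ N ∈ J := by
      rw [hJ]
      exact hN
    rw [h1]
    exact isUnit_mk_add J a₀ _ N h3 ((IsUnit.mk0 _ h2).map (algebraMap k A))

end Action

end CoinvAux

/-- **Lemma (Lemma 3.1 / lem:RelCoin, first part).** Let `W = G` be a finite group acting on
`R = k[x_1,…,x_n]` by linear substitutions and `K ≤ G` a subgroup.  If `R^K` is polynomial,
then the coinvariant algebra `R_W` is a free extension of the relative coinvariant algebra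
`R^K_W` with fiber `R_K`, via the map `ι` induced by the inclusion `R^K ⊆ R` and the natural
surjection `π : R_W → R_K`; here `ker π = ι(m)·R_W`, where `m`, the graded maximal ideal of
`R^K_W`, is generated by the classes of the `K`-invariants with zero constant term. -/
theorem coinvariants_free_extension_of_relative_coinvariants
    (k : Type*) [Field k] (n : ℕ) (G : Type*) [Group G] [Finite G]
    [MulSemiringAction G (MvPolynomial (Fin n) k)]
    [SMulCommClass G k (MvPolynomial (Fin n) k)]
    (hlin : ∀ (g : G) (d : ℕ) (f : MvPolynomial (Fin n) k),
      f.IsHomogeneous d → (g • f).IsHomogeneous d)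
    (hfaithful : ∀ g : G, (∀ f : MvPolynomial (Fin n) k, g • f = f) → g = 1)
    (K : Subgroup G)
    (hKpoly : ∃ p : Fin n → MvPolynomial (Fin n) k,
      (∀ i, ∀ g ∈ K, g • p i = p i) ∧ (∀ i, ∃ d : ℕ, (p i).IsHomogeneous d) ∧
      AlgebraicIndependent k p ∧
      Algebra.adjoin k (Set.range p) = relInvariants k (MvPolynomial (Fin n) k) G K) :
    Function.Injective
      (Ideal.quotientMap (hilbertIdeal k n G ⊤)
        (relInvariants k (MvPolynomial (Fin n) k) G K).val.toRingHom
        le_rfl) ∧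
    (@Module.Free
      ((relInvariants k (MvPolynomial (Fin n) k) G K) ⧸
        Ideal.comap (relInvariants k (MvPolynomial (Fin n) k) G K).val (hilbertIdeal k n G ⊤))
      (MvPolynomial (Fin n) k ⧸ hilbertIdeal k n G ⊤) _ _
      (Module.compHom _
        (Ideal.quotientMap (hilbertIdeal k n G ⊤)
          (relInvariants k (MvPolynomial (Fin n) k) G K).val.toRingHom
          le_rfl))) ∧
    Function.Surjective
      (Ideal.Quotient.factor (S := hilbertIdeal k n G ⊤) (T := hilbertIdeal k n G K)
        (Ideal.span_mono fun f hf => ⟨fun g _ => hf.1 g (Subgroup.mem_top g), hf.2⟩)) ∧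
    RingHom.ker
        (Ideal.Quotient.factor (S := hilbertIdeal k n G ⊤) (T := hilbertIdeal k n G K)
          (Ideal.span_mono fun f hf => ⟨fun g _ => hf.1 g (Subgroup.mem_top g), hf.2⟩)) =
      Ideal.span ((Ideal.Quotient.mk (hilbertIdeal k n G ⊤)) ''
        {f | (∀ g ∈ K, g • f = f) ∧ MvPolynomial.coeff 0 f = 0}) := by
  obtain ⟨p, _, _, _, hp⟩ := hKpoly
  have hmap : (Ideal.comap (relInvariants k (MvPolynomial (Fin n) k) G K).val
      (hilbertIdeal k n G ⊤)).map
      (algebraMap (relInvariants k (MvPolynomial (Fin n) k) G K) (MvPolynomial (Fin n) k)) =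
      hilbertIdeal k n G ⊤ := by
    apply le_antisymm
    · exact Ideal.map_le_iff_le_comap.mpr le_rfl
    · refine Ideal.span_le.mpr ?_
      rintro f ⟨hf1, hf2⟩
      refine Ideal.mem_map_of_mem
        (algebraMap (relInvariants k (MvPolynomial (Fin n) k) G K) (MvPolynomial (Fin n) k))
        (x := ⟨f, fun g _ => hf1 g (Subgroup.mem_top g)⟩) ?_
      exact Ideal.subset_span ⟨hf1, hf2⟩
  refine ⟨Ideal.quotientMap_injective' le_rfl, ?_, Ideal.Quotient.factor_surjective _, ?_⟩
  · exact CoinvAux.free_transport (hilbertIdeal k n G ⊤) _ hmap _ (fun a => rfl)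
      (CoinvAux.main_free hlin K p _ rfl hp _ rfl)
  · exact (Ideal.Quotient.factor_ker _).trans (Ideal.map_span _ _)
end

section
/- Let A, B, C be graded Artinian algebras over a field k and suppose C is a free extension of A with fiber B. Then the Hilbert function of C equals that of the tensor product A ⊗_k B: for every degree d, dim_k C_d = Σ_{i+e=d} (dim_k A_i)·(dim_k B_e). In particular dim_k C = (dim_k A)·(dim_k B). -/
namespace FreeExtAux

open DirectSum

variable {k : Type*} [Field k]

/-- The first `N` homogeneous components of a vector. -/
noncomputable def comps {V : Type*} [AddCommGroup V] [Module k V]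
    (𝒱 : ℕ → Submodule k V) [Decomposition 𝒱] (N : ℕ) :
    V →ₗ[k] ((i : Fin N) → 𝒱 i) :=
  LinearMap.pi fun i => (DirectSum.component k ℕ (fun i => 𝒱 i) i) ∘ₗ
    (decomposeLinearEquiv 𝒱).toLinearMap

lemma comps_apply {V : Type*} [AddCommGroup V] [Module k V]
    (𝒱 : ℕ → Submodule k V) [Decomposition 𝒱] (N : ℕ) (v : V) (i : Fin N) :
    comps 𝒱 N v i = decompose 𝒱 v i := rfl

lemma sum_finrank_le {V : Type*} [AddCommGroup V] [Module k V] [FiniteDimensional k V]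
    (𝒱 : ℕ → Submodule k V) [Decomposition 𝒱] (N : ℕ) :
    ∑ i ∈ Finset.range N, Module.finrank k (𝒱 i) ≤ Module.finrank k V := by
  rw [Finset.sum_range, ← Module.finrank_pi_fintype k (M := fun i : Fin N => 𝒱 i)]
  refine LinearMap.finrank_le_finrank_of_surjective (f := comps 𝒱 N) ?_
  intro f
  refine ⟨∑ i, (f i : V), ?_⟩
  funext j
  rw [comps_apply]
  ext
  rw [decompose_sum, DFinsupp.finsetSum_apply, Submodule.coe_sum, Finset.sum_eq_single j]
  · rw [decompose_coe, of_eq_same]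
  · intro i _ hij
    rw [decompose_coe, of_eq_of_ne]
    · rfl
    · intro h
      exact hij (Fin.ext h.symm)
  · simp

lemma exists_le_sum_finrank {V : Type*} [AddCommGroup V] [Module k V] [FiniteDimensional k V]
    (𝒱 : ℕ → Submodule k V) [Decomposition 𝒱] :
    ∃ N₀, ∀ N, N₀ ≤ N →
      Module.finrank k V ≤ ∑ i ∈ Finset.range N, Module.finrank k (𝒱 i) := by
  have hfin : {i | 𝒱 i ≠ ⊥}.Finite := Submodule.finite_ne_bot_of_iSupIndep
    (Decomposition.isInternal 𝒱).submodule_iSupIndep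
  obtain ⟨n, hn⟩ := hfin.bddAbove
  refine ⟨n + 1, fun N hN => ?_⟩
  rw [Finset.sum_range, ← Module.finrank_pi_fintype k (M := fun i : Fin N => 𝒱 i)]
  refine LinearMap.finrank_le_finrank_of_injective (f := comps 𝒱 N) ?_
  rw [← LinearMap.ker_eq_bot, LinearMap.ker_eq_bot']
  intro v hv
  apply (decompose 𝒱).injective
  rw [decompose_zero]
  refine DFinsupp.ext fun i => ?_
  by_cases hi : i < N
  · exact congrFun hv ⟨i, hi⟩
  · have hb : 𝒱 i = ⊥ := by
      by_contra h
      have := hn h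
      omega
    ext
    have h := hb.le (decompose 𝒱 v i).2
    simpa using h

lemma finrank_mul_le {C : Type*} [CommRing C] [Algebra k C] [FiniteDimensional k C]
    (P Q : Submodule k C) :
    Module.finrank k (P * Q : Submodule k C) ≤ Module.finrank k P * Module.finrank k Q := by
  rw [← Module.finrank_tensorProduct, ← Submodule.mulMap_range]
  exact LinearMap.finrank_range_le _

lemma finrank_finset_sup_le {C : Type*} [AddCommGroup C] [Module k C] [FiniteDimensional k C]
    {α : Type*} (s : Finset α) (P : α → Submodule k C) :
    Module.finrank k (s.sup P : Submodule k C) ≤ ∑ i ∈ s, Module.finrank k (P i) := by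
  classical
  induction s using Finset.induction_on with
  | empty => simp
  | insert a s ha ih =>
    rw [Finset.sup_insert, Finset.sum_insert ha]
    exact (Submodule.finrank_add_le_finrank_add_finrank _ _).trans (by omega)

lemma total {A B C : Type*} [CommRing A] [CommRing B] [CommRing C]
    [Algebra k A] [Algebra k B] [Algebra k C]
    [FiniteDimensional k A] [FiniteDimensional k B] [FiniteDimensional k C]
    (𝒜 : ℕ → Submodule k A) [GradedAlgebra 𝒜]
    (hA0 : 𝒜 0 = 1)
    (ι : A →ₐ[k] C) (π : C →ₐ[k] B)
    (hinj : Function.Injective ι)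
    (hfree : @Module.Free A C _ _ (Module.compHom C (ι : A →+* C)))
    (hsurj : Function.Surjective π)
    (hker : ∀ i, ∀ a ∈ 𝒜 (i + 1), π (ι a) = 0) :
    Module.finrank k A * Module.finrank k B ≤ Module.finrank k C := by
  rcases subsingleton_or_nontrivial A with hA | hA
  · simp [Module.finrank_zero_of_subsingleton]
  let _ : Module A C := Module.compHom C (ι : A →+* C)
  have hsm : ∀ (a : A) (c : C), a • c = ι a * c := fun a c => rfl
  have : IsScalarTower k A C := ⟨fun r a c => by simp [hsm]⟩
  have : Module.Free A C := hfree
  have : Module.Finite A C := Module.Finite.of_restrictScalars_finite k A C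
  rw [← Module.finrank_mul_finrank k A C]
  refine Nat.mul_le_mul_left _ ?_
  let b := Module.finBasis A C
  have hscal : ∀ a : A, ∃ r : k, π (ι a) = algebraMap k B r := by
    intro a
    induction a using Decomposition.inductionOn 𝒜 with
    | zero => exact ⟨0, by simp⟩
    | @homogeneous i m =>
      cases i with
      | zero =>
        obtain ⟨r, hr⟩ := Submodule.mem_one.1 (hA0.le m.2)
        exact ⟨r, by rw [← hr]; simp⟩
      | succ i => exact ⟨0, by rw [hker i _ m.2]; simp⟩
    | add x y hx hy =>
      obtain ⟨r, hr⟩ := hx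
      obtain ⟨t, ht⟩ := hy
      exact ⟨r + t, by simp [hr, ht]⟩
  have hspan : Submodule.span k (Set.range fun i => π (b i)) = ⊤ := by
    rw [eq_top_iff]
    rintro x -
    obtain ⟨c, rfl⟩ := hsurj x
    rw [← b.sum_repr c, map_sum]
    refine Submodule.sum_mem _ fun i _ => ?_
    obtain ⟨r, hr⟩ := hscal (b.repr c i)
    rw [hsm, map_mul, hr, ← Algebra.smul_def]
    exact Submodule.smul_mem _ _ (Submodule.subset_span ⟨i, rfl⟩)
  have := finrank_range_le_card (R := k) (fun i => π (b i))
  rw [Set.finrank, hspan, finrank_top, Fintype.card_fin] at this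
  exact this

lemma exists_section {B C : Type*} [CommRing B] [CommRing C]
    [Algebra k B] [Algebra k C] [FiniteDimensional k B] [FiniteDimensional k C]
    (ℬ : ℕ → Submodule k B) (𝒞 : ℕ → Submodule k C)
    [GradedAlgebra ℬ] [GradedAlgebra 𝒞] (π : C →ₐ[k] B)
    (hπgr : ∀ i : ℕ, ∀ c ∈ 𝒞 i, π c ∈ ℬ i) (e : ℕ) :
    ∃ S : Submodule k C, S ≤ 𝒞 e ∧ Module.finrank k S ≤ Module.finrank k (ℬ e) ∧
      ∀ c ∈ 𝒞 e, ∃ s ∈ S, π s = π c := by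
  let f : 𝒞 e →ₗ[k] B := π.toLinearMap ∘ₗ (𝒞 e).subtype
  obtain ⟨g, hg⟩ := f.rangeRestrict.exists_rightInverse_of_surjective f.range_rangeRestrict
  refine ⟨LinearMap.range ((𝒞 e).subtype ∘ₗ g), ?_, ?_, ?_⟩
  · rintro _ ⟨x, rfl⟩
    exact (g x).2
  · refine (LinearMap.finrank_range_le _).trans (Submodule.finrank_mono ?_)
    rintro _ ⟨c, rfl⟩
    exact hπgr e _ c.2
  · intro c hc
    refine ⟨_, ⟨f.rangeRestrict ⟨c, hc⟩, rfl⟩, ?_⟩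
    have := LinearMap.congr_fun hg (f.rangeRestrict ⟨c, hc⟩)
    exact congrArg Subtype.val this

lemma degree_le {A B C : Type*} [CommRing A] [CommRing B] [CommRing C]
    [Algebra k A] [Algebra k B] [Algebra k C]
    [FiniteDimensional k A] [FiniteDimensional k B] [FiniteDimensional k C]
    (𝒜 : ℕ → Submodule k A) (ℬ : ℕ → Submodule k B) (𝒞 : ℕ → Submodule k C)
    [GradedAlgebra 𝒜] [GradedAlgebra ℬ] [GradedAlgebra 𝒞]
    (ι : A →ₐ[k] C) (π : C →ₐ[k] B)
    (hιgr : ∀ i : ℕ, ∀ a ∈ 𝒜 i, ι a ∈ 𝒞 i)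
    (hπgr : ∀ i : ℕ, ∀ c ∈ 𝒞 i, π c ∈ ℬ i)
    (hker : RingHom.ker π = Ideal.span (⇑ι '' (⋃ i : ℕ, (𝒜 (i + 1) : Set A)))) (d : ℕ) :
    Module.finrank k (𝒞 d) ≤
      ∑ p ∈ Finset.HasAntidiagonal.antidiagonal d,
        Module.finrank k (𝒜 p.1) * Module.finrank k (ℬ p.2) := by
  choose S hS hSr hSs using exists_section ℬ 𝒞 π hπgr
  let T : ℕ → Submodule k C := fun d =>
    (Finset.HasAntidiagonal.antidiagonal d).sup
      fun p => (𝒜 p.1).map ι.toLinearMap * S p.2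
  have hmemT : ∀ i e a c, a ∈ 𝒜 i → c ∈ S e → ι a * c ∈ T (i + e) := by
    intro i e a c ha hc
    have hle : (𝒜 i).map ι.toLinearMap * S e ≤ T (i + e) :=
      Finset.le_sup (f := fun p : ℕ × ℕ => (𝒜 p.1).map ι.toLinearMap * S p.2)
        (b := (i, e)) (by simp)
    exact hle (Submodule.mul_mem_mul ⟨a, ha, rfl⟩ hc)
  have hmulT : ∀ i j a c, a ∈ 𝒜 i → c ∈ T j → ι a * c ∈ T (i + j) := by
    intro i j a c ha hc
    have hle : T j ≤ (T (i + j)).comap (LinearMap.mulLeft k (ι a)) := by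
      refine Finset.sup_le fun p hp => ?_
      rw [Submodule.mul_le]
      rintro _ ⟨a', ha', rfl⟩ s hs
      rw [Finset.HasAntidiagonal.mem_antidiagonal] at hp
      have h := hmemT (i + p.1) p.2 (a * a') s (SetLike.mul_mem_graded ha ha') hs
      rw [map_mul, mul_assoc, add_assoc, hp] at h
      exact h
    exact hle hc
  have hmain : ∀ d, 𝒞 d ≤ T d := by
    intro d
    induction d using Nat.strong_induction_on with
    | _ d ih =>
    intro c hc
    obtain ⟨s, hs, hsc⟩ := hSs d c hc
    have hsT : s ∈ T d := by
      have := hmemT 0 d 1 s SetLike.GradedOne.one_mem hs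
      simpa using this
    have hx : c - s ∈ Ideal.span (⇑ι '' (⋃ i : ℕ, (𝒜 (i + 1) : Set A))) := by
      rw [← hker, RingHom.mem_ker, map_sub, hsc, sub_self]
    have key : ∀ x ∈ Ideal.span (⇑ι '' (⋃ i : ℕ, (𝒜 (i + 1) : Set A))),
        (decompose 𝒞 x d : C) ∈ T d := by
      intro x hx
      induction hx using Submodule.closure_induction with
      | zero => simp
      | add x y _ _ hx hy =>
        rw [decompose_add]
        exact Submodule.add_mem _ hx hy
      | smul_mem r x hx =>
        obtain ⟨a, ha, rfl⟩ := hx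
        obtain ⟨i, ha⟩ := Set.mem_iUnion.1 ha
        rw [smul_eq_mul, mul_comm]
        by_cases hi : i + 1 ≤ d
        · rw [coe_decompose_mul_of_left_mem_of_le 𝒞 (hιgr _ a ha) hi]
          have h := hmulT (i + 1) (d - (i + 1)) a _ ha
            (ih (d - (i + 1)) (by omega) (decompose 𝒞 r (d - (i + 1))).2)
          rwa [Nat.add_sub_cancel' hi] at h
        · rw [coe_decompose_mul_of_left_mem_of_not_le 𝒞 (hιgr _ a ha) hi]
          exact Submodule.zero_mem _
    have hcs := key _ hx
    rw [decompose_of_mem_same 𝒞 (Submodule.sub_mem _ hc (hS d hs))] at hcs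
    have := Submodule.add_mem _ hcs hsT
    simpa using this
  calc Module.finrank k (𝒞 d) ≤ Module.finrank k (T d) := Submodule.finrank_mono (hmain d)
    _ ≤ _ := finrank_finset_sup_le _ _
    _ ≤ _ := Finset.sum_le_sum fun p _ => (finrank_mul_le _ _).trans
        (Nat.mul_le_mul (Submodule.finrank_map_le _ _) (hSr _))

end FreeExtAux



/-- **Remark/Proposition (Remarks 1.9(3), first part).** If `C` is a free extension of the
graded Artinian algebra `A` with fiber `B`, then the Hilbert function of `C` equals that of
`A ⊗ₖ B`: for every degree `d`, `dim_k C_d = Σ_{i+e=d} (dim_k A_i)·(dim_k B_e)`; in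
particular `dim_k C = (dim_k A)·(dim_k B)`. -/
theorem free_extension_hilbert_function_eq_tensor_product
    (k : Type*) [Field k]
    (A B C : Type*) [CommRing A] [CommRing B] [CommRing C]
    [Algebra k A] [Algebra k B] [Algebra k C]
    [FiniteDimensional k A] [FiniteDimensional k B] [FiniteDimensional k C]
    (𝒜 : ℕ → Submodule k A) (ℬ : ℕ → Submodule k B) (𝒞 : ℕ → Submodule k C)
    [GradedAlgebra 𝒜] [GradedAlgebra ℬ] [GradedAlgebra 𝒞]
    (hA0 : 𝒜 0 = 1) (hB0 : ℬ 0 = 1) (hC0 : 𝒞 0 = 1)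
    (ι : A →ₐ[k] C) (π : C →ₐ[k] B)
    (hιgr : ∀ i : ℕ, ∀ a ∈ 𝒜 i, ι a ∈ 𝒞 i)
    (hπgr : ∀ i : ℕ, ∀ c ∈ 𝒞 i, π c ∈ ℬ i)
    (hinj : Function.Injective ι)
    (hfree : @Module.Free A C _ _ (Module.compHom C (ι : A →+* C)))
    (hsurj : Function.Surjective π)
    (hker : RingHom.ker π = Ideal.span (⇑ι '' (⋃ i : ℕ, (𝒜 (i + 1) : Set A)))) :
    (∀ d : ℕ, Module.finrank k (𝒞 d) =
      ∑ p ∈ Finset.HasAntidiagonal.antidiagonal d, Module.finrank k (𝒜 p.1) * Module.finrank k (ℬ p.2)) ∧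
    Module.finrank k C = Module.finrank k A * Module.finrank k B := by
  have hk : ∀ i, ∀ a ∈ 𝒜 (i + 1), π (ι a) = 0 := by
    intro i a ha
    rw [← RingHom.mem_ker, hker]
    exact Ideal.subset_span ⟨a, Set.mem_iUnion.2 ⟨i, ha⟩, rfl⟩
  have htot := FreeExtAux.total 𝒜 hA0 ι π hinj hfree hsurj hk
  have hdeg := FreeExtAux.degree_le 𝒜 ℬ 𝒞 ι π hιgr hπgr hker
  have hprod : ∀ N, ∑ d ∈ Finset.range N, ∑ p ∈ Finset.HasAntidiagonal.antidiagonal d,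
      Module.finrank k (𝒜 p.1) * Module.finrank k (ℬ p.2) ≤
      Module.finrank k A * Module.finrank k B := by
    intro N
    refine le_trans ?_ (Nat.mul_le_mul (FreeExtAux.sum_finrank_le 𝒜 N)
      (FreeExtAux.sum_finrank_le ℬ N))
    rw [Finset.sum_mul_sum, ← Finset.sum_product', ← Finset.sum_biUnion]
    · refine Finset.sum_le_sum_of_subset ?_
      intro p hp
      simp only [Finset.mem_biUnion, Finset.mem_range, Finset.HasAntidiagonal.mem_antidiagonal,
        Finset.mem_product] at hp ⊢
      omega
    · intro i _ j _ hij
      rw [Function.onFun, Finset.disjoint_left]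
      intro p hp hq
      rw [Finset.HasAntidiagonal.mem_antidiagonal] at hp hq
      exact hij (hp.symm.trans hq)
  obtain ⟨N₀, hN₀⟩ := FreeExtAux.exists_le_sum_finrank 𝒞
  constructor
  · intro d
    have h1 := hN₀ (max N₀ (d + 1)) (le_max_left _ _)
    have h2 := hprod (max N₀ (d + 1))
    have hle := Finset.sum_le_sum fun i (_ : i ∈ Finset.range (max N₀ (d + 1))) => hdeg i
    have heq := le_antisymm hle (h2.trans (htot.trans h1))
    exact (Finset.sum_eq_sum_iff_of_le fun i _ => hdeg i).1 heq d
      (Finset.mem_range.2 (lt_of_lt_of_le (Nat.lt_succ_self d) (le_max_right _ _)))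
  · refine le_antisymm ?_ htot
    exact (hN₀ N₀ le_rfl).trans ((Finset.sum_le_sum fun i _ => hdeg i).trans (hprod N₀))
end
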